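/- Let D := B(0,1) ∪ B(1+i, 1) ∪ B(1−i, 1) ⊂ ℂ be the union of the three open disks of radius 1 centered at 0, 1+i and 1−i. Then D does not satisfy the (A)-condition: there do not exist constants Θ₀ ∈ (0,1) and ρ₀ ∈ (0,1) such that area(D ∩ B(ζ,ρ)) ≤ Θ₀ · area(B(ζ,ρ)) for all ζ ∈ ∂D and all ρ ∈ (0, ρ₀]. In fact, 1 ∈ ∂D and area(D ∩ B(1,ρ)) / area(B(1,ρ)) → 1 as ρ → 0⁺. -/

import Mathlib

/-! With `w = z - 1 = x + iy`, the point `z` lies in one of the disks `B(1 ± i, 1)` iff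
`|w|² < 2|y|`. Hence a point of `B(1, ρ)` outside the domain satisfies `|y| ≤ ρ²/2` and `|x| ≤ ρ`:
the complement is contained in a rectangle of area `2ρ³` (`compl_subset_rect`, `volume_rect`).
Relative to the area `πρ²` of the ball this is `O(ρ)`, so the density of the domain at the boundary
point `1` is `1`, which is incompatible with an upper bound `Θ₀ < 1` at small radii. -/

open MeasureTheory Metric Filter

theorem volume_rect {ρ : ℝ} (hρ : 0 < ρ) :
    volume (Set.Icc (1 - ρ) (1 + ρ) ×ℂ Set.Icc (-(ρ ^ 2 / 2)) (ρ ^ 2 / 2)) =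
      ENNReal.ofReal (2 * ρ ^ 3) := by
  have h := Complex.volume_preserving_equiv_real_prod.measure_preimage
    (s := Set.Icc (1 - ρ) (1 + ρ) ×ˢ Set.Icc (-(ρ ^ 2 / 2)) (ρ ^ 2 / 2))
    (measurableSet_Icc.prod measurableSet_Icc).nullMeasurableSet
  rw [Measure.volume_eq_prod, Measure.prod_prod, Real.volume_Icc, Real.volume_Icc,
    ← ENNReal.ofReal_mul (by linarith)] at h
  refine Eq.trans ?_ (h.trans ?_)
  · rfl
  · congr 1; ring

/-- Near `1` the complement of the two disks tangent to the real axis, hence that of the domain,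
lies in a rectangle of height `ρ²` around the real axis. -/
theorem compl_subset_rect {ρ : ℝ} (hρ : 0 < ρ) :
    ball (1 : ℂ) ρ \ (ball (0 : ℂ) 1 ∪ ball (1 + Complex.I) 1 ∪ ball (1 - Complex.I) 1) ⊆
      Set.Icc (1 - ρ) (1 + ρ) ×ℂ Set.Icc (-(ρ ^ 2 / 2)) (ρ ^ 2 / 2) := by
  rintro z ⟨hz, hD⟩
  have key : ∀ (w : ℂ) (r : ℝ), 0 < r →
      (z ∈ ball w r ↔ (z.re - w.re) ^ 2 + (z.im - w.im) ^ 2 < r ^ 2) := by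
    intro w r hr
    rw [mem_ball, Complex.dist_eq_re_im, Real.sqrt_lt' hr]
  simp only [Set.mem_union, not_or] at hD
  obtain ⟨⟨-, h1⟩, h2⟩ := hD
  rw [key _ _ hρ] at hz
  rw [key _ _ one_pos] at h1 h2
  simp at hz h1 h2
  rw [Complex.mem_reProdIm, Set.mem_Icc, Set.mem_Icc]
  have hx : |z.re - 1| ≤ ρ := abs_le_of_sq_le_sq (by nlinarith [sq_nonneg z.im]) hρ.le
  rw [abs_le] at hx
  refine ⟨⟨by linarith, by linarith⟩, by nlinarith, by nlinarith⟩

/-- The density of the domain in `B(1, ρ)` is at least `1 - 2ρ/π`. -/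
theorem density_lower {ρ : ℝ} (hρ : 0 < ρ) :
    1 - 2 / Real.pi * ρ ≤
      (volume ((ball (0 : ℂ) 1 ∪ ball (1 + Complex.I) 1 ∪ ball (1 - Complex.I) 1) ∩
            ball (1 : ℂ) ρ)).toReal / (volume (ball (1 : ℂ) ρ)).toReal := by
  have hfin : volume (ball (1 : ℂ) ρ) ≠ ⊤ := measure_ball_lt_top.ne
  have hvol : (volume (ball (1 : ℂ) ρ)).toReal = Real.pi * ρ ^ 2 := by
    rw [Complex.volume_ball]
    simp [hρ.le]
    ring
  have hc := measure_mono (μ := volume) (compl_subset_rect hρ)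
  rw [volume_rect hρ] at hc
  have hc' := ENNReal.toReal_mono ENNReal.ofReal_ne_top hc
  rw [ENNReal.toReal_ofReal (by positivity)] at hc'
  set D := ball (0 : ℂ) 1 ∪ ball (1 + Complex.I) 1 ∪ ball (1 - Complex.I) 1 with hD
  have hDm : MeasurableSet D :=
    ((isOpen_ball.union isOpen_ball).union isOpen_ball).measurableSet
  have hsum := measureReal_inter_add_sdiff (μ := volume) (s := ball (1 : ℂ) ρ) hDm hfin
  simp only [Measure.real] at hsum
  rw [Set.inter_comm, hvol] at hsum
  rw [hvol, le_div_iff₀ (by positivity)]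
  have : (1 - 2 / Real.pi * ρ) * (Real.pi * ρ ^ 2) = Real.pi * ρ ^ 2 - 2 * ρ ^ 3 := by
    field_simp
  linarith

theorem one_mem_frontier :
    (1 : ℂ) ∈ frontier (ball (0 : ℂ) 1 ∪ ball (1 + Complex.I) 1 ∪ ball (1 - Complex.I) 1) := by
  rw [((isOpen_ball.union isOpen_ball).union isOpen_ball).frontier_eq]
  refine ⟨?_, by simp [dist_eq_norm]⟩
  refine closure_mono (Set.subset_union_left.trans Set.subset_union_left) ?_
  rw [closure_ball _ one_ne_zero]
  simp

theorem tendsto_density :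
    Tendsto
      (fun ρ : ℝ =>
        (volume ((ball (0 : ℂ) 1 ∪ ball (1 + Complex.I) 1 ∪ ball (1 - Complex.I) 1) ∩
            ball (1 : ℂ) ρ)).toReal / (volume (ball (1 : ℂ) ρ)).toReal)
      (nhdsWithin 0 (Set.Ioi 0)) (nhds 1) := by
  have hlow : Tendsto (fun ρ : ℝ => 1 - 2 / Real.pi * ρ) (nhdsWithin 0 (Set.Ioi 0)) (nhds 1) := by
    have h : Continuous fun ρ : ℝ => 1 - 2 / Real.pi * ρ := by fun_prop
    simpa using (h.tendsto 0).mono_left nhdsWithin_le_nhds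
  refine tendsto_of_tendsto_of_tendsto_of_le_of_le' hlow tendsto_const_nhds ?_ ?_
  · filter_upwards [self_mem_nhdsWithin] with ρ hρ using density_lower hρ
  · refine Eventually.of_forall fun ρ => div_le_one_of_le₀ ?_ ENNReal.toReal_nonneg
    exact ENNReal.toReal_mono measure_ball_lt_top.ne (measure_mono Set.inter_subset_right)

/-- The union of the three open unit disks centered at `0`, `1+i`, `1−i` fails the
(A)-condition of Ladyzhenskaya–Ural'tseva: `1` is a boundary point at which
`area(D ∩ B(1,ρ))/area(B(1,ρ)) → 1` as `ρ → 0⁺`, and there are no constants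
`Θ₀, ρ₀ ∈ (0,1)` with `area(D ∩ B(ζ,ρ)) ≤ Θ₀·area(B(ζ,ρ))` for all `ζ ∈ ∂D`, `ρ ∈ (0,ρ₀]`. -/
theorem three_disks_fail_A_condition :
    (1 : ℂ) ∈ frontier (ball (0 : ℂ) 1 ∪ ball (1 + Complex.I) 1 ∪ ball (1 - Complex.I) 1) ∧
    Tendsto
      (fun ρ : ℝ =>
        (volume ((ball (0 : ℂ) 1 ∪ ball (1 + Complex.I) 1 ∪ ball (1 - Complex.I) 1) ∩
            ball (1 : ℂ) ρ)).toReal / (volume (ball (1 : ℂ) ρ)).toReal)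
      (nhdsWithin 0 (Set.Ioi 0)) (nhds 1) ∧
    ¬ ∃ Θ₀ ∈ Set.Ioo (0 : ℝ) 1, ∃ ρ₀ ∈ Set.Ioo (0 : ℝ) 1,
        ∀ ζ ∈ frontier (ball (0 : ℂ) 1 ∪ ball (1 + Complex.I) 1 ∪ ball (1 - Complex.I) 1),
          ∀ ρ ∈ Set.Ioc (0 : ℝ) ρ₀,
            volume ((ball (0 : ℂ) 1 ∪ ball (1 + Complex.I) 1 ∪ ball (1 - Complex.I) 1) ∩
                ball ζ ρ) ≤
              ENNReal.ofReal Θ₀ * volume (ball ζ ρ) := by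
  refine ⟨one_mem_frontier, tendsto_density, ?_⟩
  rintro ⟨Θ, ⟨hΘ0, hΘ1⟩, ρ₀, ⟨hρ₀, -⟩, h⟩
  obtain ⟨ρ, hlt, hρ⟩ := ((tendsto_density.eventually (lt_mem_nhds hΘ1)).and
    (Ioc_mem_nhdsGT hρ₀)).exists
  have hle := ENNReal.toReal_mono
    (ENNReal.mul_ne_top ENNReal.ofReal_ne_top measure_ball_lt_top.ne)
    (h 1 one_mem_frontier ρ hρ)
  rw [ENNReal.toReal_mul, ENNReal.toReal_ofReal hΘ0.le] at hle
  have hpos : 0 < (volume (ball (1 : ℂ) ρ)).toReal :=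
    ENNReal.toReal_pos (measure_ball_pos _ _ hρ.1).ne' measure_ball_lt_top.ne
  rw [lt_div_iff₀ hpos] at hlt
  exact hlt.not_ge hle
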